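/- arXiv:2304.04454 — 3 statements merged into one kernel-verified Lean document; each statement's English description precedes it below -/
import Mathlib

section
/- Let T > 0, let α > 0 be a non-integer real number, let m = ⌈α⌉, and let f : ℝ → ℝ be a nonconstant, T-periodic, m-times continuously differentiable function. Then the Caputo fractional derivative g(t) = (1/Γ(m−α)) ∫_0^t (t−τ)^{m−α−1} f^{(m)}(τ) dτ (for t ≥ 0) is not T-periodic on [0,∞); that is, it is NOT the case that g(t+T) = g(t) for all t ≥ 0. -/
open Real MeasureTheory intervalIntegral

/-!
Write `q = m - α - 1` and `h = f⁽ᵐ⁾`. By periodicity of `h`, the difference `g (t + T) - g t` is a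
nonzero multiple of `∫ τ in (-T)..0, (t - τ) ^ q * h τ`. If this vanishes near some `t > 0`, then
differentiating in `t` gives `∫ τ in (-T)..0, (t - τ) ^ (q - n) * h τ = 0` for every `n`, because
`q (q - 1) ⋯ (q - n + 1) ≠ 0` for non-integral `q`. These are all the moments of `(t - τ) ^ q * h τ`
against the powers of the injective function `τ ↦ (t - τ)⁻¹`, so Stone–Weierstrass forces `h = 0` on
a period. A periodic function whose `m`-th derivative vanishes is constant.
-/

section

open Set Filter
open scoped Topology

section Moments

theorem dense_span_range_pow_of_injective {X : Type*} [TopologicalSpace X] [CompactSpace X]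
    {φ : C(X, ℝ)} (hφ : Function.Injective φ) :
    Dense (Submodule.span ℝ (range fun n : ℕ => φ ^ n) : Set C(X, ℝ)) := by
  have hsep : (Algebra.adjoin ℝ {φ}).SeparatesPoints := fun x y hxy =>
    ⟨φ, ⟨φ, Algebra.self_mem_adjoin_singleton ℝ φ, rfl⟩, hφ.ne hxy⟩
  have hclosure := ContinuousMap.subalgebra_topologicalClosure_eq_top_of_separatesPoints _ hsep
  rw [← Submonoid.coe_powers, Submonoid.powers_eq_closure, ← Algebra.adjoin_eq_span,
    Subalgebra.coe_toSubmodule, dense_iff_closure_eq, ← Subalgebra.topologicalClosure_coe, hclosure,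
    Algebra.coe_top]

theorem ae_eq_zero_of_forall_integral_pow_mul_eq_zero {X : Type*} [TopologicalSpace X]
    [CompactSpace X] [MeasurableSpace X] [BorelSpace X] {μ : Measure X} [IsFiniteMeasure μ]
    {φ k : C(X, ℝ)} (hφ : Function.Injective φ) (h : ∀ n : ℕ, ∫ x, φ x ^ n * k x ∂μ = 0) :
    k =ᵐ[μ] 0 := by
  let toL2 := ContinuousMap.toLp (E := ℝ) 2 μ ℝ
  have horth : (innerSL ℝ (toL2 k)).comp toL2 = 0 := by
    refine ContinuousLinearMap.ext_on (dense_span_range_pow_of_injective hφ) ?_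
    rintro _ ⟨n, rfl⟩
    simpa [toL2, ContinuousMap.inner_toLp] using h n
  have hk : toL2 k = 0 := inner_self_eq_zero.1 (DFunLike.congr_fun horth k)
  exact (ContinuousMap.coeFn_toLp μ k).symm.trans (hk ▸ Lp.coeFn_zero ℝ 2 μ)

variable {a b : ℝ} {φ : ℝ → ℝ}

theorem eqOn_zero_of_forall_integral_pow_mul_eq_zero {k : ℝ → ℝ} (hab : a < b)
    (hφ : ContinuousOn φ (Icc a b)) (hinj : InjOn φ (Icc a b)) (hk : ContinuousOn k (Icc a b))
    (h : ∀ n : ℕ, ∫ x in a..b, φ x ^ n * k x = 0) : EqOn k 0 (Icc a b) := by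
  let μ : Measure (Icc a b) := volume.comap Subtype.val
  have : IsFiniteMeasure μ := ⟨by
    rw [comap_subtype_coe_apply measurableSet_Icc, image_univ, Subtype.range_coe]
    exact measure_Icc_lt_top⟩
  have hae := ae_eq_zero_of_forall_integral_pow_mul_eq_zero (μ := μ)
    (φ := ⟨(Icc a b).domRestrict φ, hφ.domRestrict⟩)
    (k := ⟨(Icc a b).domRestrict k, hk.domRestrict⟩) hinj.injective fun n => by
      rw [← h n, integral_of_le hab.le, ← integral_Icc_eq_integral_Ioc,
        ← integral_subtype_comap measurableSet_Icc]
      rfl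
  exact Measure.eqOn_Icc_of_ae_eq volume hab.ne
    ((ae_restrict_iff_subtype measurableSet_Icc).2 hae) hk continuousOn_const

theorem eqOn_zero_of_forall_integral_pow_smul_eq_zero {E : Type*} [NormedAddCommGroup E]
    [NormedSpace ℝ E] [CompleteSpace E] {k : ℝ → E} (hab : a < b)
    (hφ : ContinuousOn φ (Icc a b)) (hinj : InjOn φ (Icc a b)) (hk : ContinuousOn k (Icc a b))
    (h : ∀ n : ℕ, ∫ x in a..b, φ x ^ n • k x = 0) : EqOn k 0 (Icc a b) := by
  refine fun x hx => SeparatingDual.eq_zero_of_forall_dual_eq_zero (R := ℝ) fun ℓ => ?_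
  refine eqOn_zero_of_forall_integral_pow_mul_eq_zero hab hφ hinj
    (ℓ.continuous.comp_continuousOn hk) (fun n => ?_) hx
  have hint : IntervalIntegrable (fun x => φ x ^ n • k x) volume a b :=
    ((hφ.pow n).smul hk).intervalIntegrable_of_Icc hab.le
  simpa [h n] using ℓ.intervalIntegral_comp_comm hint

end Moments

section PowerKernel

variable {E : Type*} [NormedAddCommGroup E] [NormedSpace ℝ E] {a b t p : ℝ} {k : ℝ → E}

theorem continuousOn_sub_rpow (ht : b < t) (p : ℝ) :
    ContinuousOn (fun τ => (t - τ) ^ p) (Icc a b) :=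
  ContinuousOn.rpow_const (by fun_prop) fun τ hτ => Or.inl (by linarith [hτ.2])

theorem intervalIntegrable_sub_rpow_smul (hab : a ≤ b) (ht : b < t) (p : ℝ)
    (hk : IntervalIntegrable k volume a b) :
    IntervalIntegrable (fun τ => (t - τ) ^ p • k τ) volume a b :=
  hk.continuousOn_smul (by simpa only [uIcc_of_le hab] using continuousOn_sub_rpow ht p)

theorem hasDerivAt_integral_sub_rpow_smul (hab : a ≤ b) (ht : b < t) (p : ℝ)
    (hk : IntervalIntegrable k volume a b) :
    HasDerivAt (fun t => ∫ τ in a..b, (t - τ) ^ p • k τ)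
      (p • ∫ τ in a..b, (t - τ) ^ (p - 1) • k τ) t := by
  set δ := (t - b) / 2 with hδ
  have hδ0 : 0 < δ := by linarith
  obtain ⟨C, hC⟩ := (isCompact_Icc (a := δ) (b := t - a + δ)).exists_bound_of_continuousOn
    (f := fun x => p * x ^ (p - 1)) (continuousOn_const.mul
      (continuousOn_id.rpow_const fun x hx => Or.inl (hδ0.trans_le hx.1).ne'))
  have hmem {s τ : ℝ} (hs : s ∈ Ioo (t - δ) (t + δ)) (hτ : τ ∈ uIoc a b) :
      s - τ ∈ Icc δ (t - a + δ) := by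
    rw [uIoc_of_le hab] at hτ
    constructor <;> linarith [hs.1, hs.2, hτ.1, hτ.2]
  have hint (q : ℝ) {s : ℝ} (hs : b < s) := intervalIntegrable_sub_rpow_smul hab hs q hk
  rw [← intervalIntegral.integral_smul]
  simp only [smul_smul]
  refine (hasDerivAt_integral_of_dominated_loc_of_deriv_le
    (F := fun s τ => (s - τ) ^ p • k τ) (F' := fun s τ => (p * (s - τ) ^ (p - 1)) • k τ)
    (s := Ioo (t - δ) (t + δ)) (bound := fun τ => C * ‖k τ‖)
    (Ioo_mem_nhds (by linarith) (by linarith)) ?_ (hint p ht) ?_ ?_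
    (hk.norm.const_mul C) ?_).2
  · filter_upwards [lt_mem_nhds ht] with s hs using (hint p hs).def'.aestronglyMeasurable
  · simp only [mul_smul]
    exact (hint (p - 1) ht).def'.aestronglyMeasurable.const_smul p
  · refine .of_forall fun τ hτ s hs => ?_
    rw [norm_smul]
    gcongr
    exact hC _ (hmem hs hτ)
  · refine .of_forall fun τ hτ s hs => ?_
    have hne : s - τ ≠ 0 := (hδ0.trans_le (hmem hs hτ).1).ne'
    simpa using (((hasDerivAt_id s).sub_const τ).rpow_const (p := p) (Or.inl hne)).smul_const (k τ)

theorem eventually_integral_sub_rpow_sub_natCast_smul_eq_zero (hab : a ≤ b) (ht : b < t)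
    (hp : ∀ n : ℕ, p ≠ n) (hk : IntervalIntegrable k volume a b)
    (h : ∀ᶠ s in 𝓝 t, ∫ τ in a..b, (s - τ) ^ p • k τ = 0) (n : ℕ) :
    ∀ᶠ s in 𝓝 t, ∫ τ in a..b, (s - τ) ^ (p - n) • k τ = 0 := by
  induction n with
  | zero => simpa using h
  | succ n ih =>
    filter_upwards [ih.eventually_nhds, lt_mem_nhds ht] with s hs hbs
    have hderiv : (p - n) • ∫ τ in a..b, (s - τ) ^ (p - n - 1) • k τ = 0 :=
      (hasDerivAt_integral_sub_rpow_smul hab hbs (p - n) hk).unique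
        ((hasDerivAt_const s (0 : E)).congr_of_eventuallyEq hs)
    rw [Nat.cast_succ, ← sub_sub]
    exact (smul_eq_zero.1 hderiv).resolve_left (sub_ne_zero.2 (hp n))

theorem eqOn_zero_of_eventually_integral_sub_rpow_smul_eq_zero [CompleteSpace E] (hab : a < b)
    (ht : b < t) (hp : ∀ n : ℕ, p ≠ n) (hk : ContinuousOn k (Icc a b))
    (h : ∀ᶠ s in 𝓝 t, ∫ τ in a..b, (s - τ) ^ p • k τ = 0) : EqOn k 0 (Icc a b) := by
  have hpos {τ : ℝ} (hτ : τ ∈ Icc a b) : 0 < t - τ := by linarith [hτ.2]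
  have hmoments (n : ℕ) : ∫ τ in a..b, (t - τ)⁻¹ ^ n • (t - τ) ^ p • k τ = 0 := by
    rw [← (eventually_integral_sub_rpow_sub_natCast_smul_eq_zero hab.le ht hp
      (hk.intervalIntegrable_of_Icc hab.le) h n).self_of_nhds]
    refine integral_congr fun τ hτ => ?_
    rw [uIcc_of_le hab.le] at hτ
    simp only [smul_smul, rpow_sub (hpos hτ), rpow_natCast, inv_pow, inv_mul_eq_div]
  have hzero := eqOn_zero_of_forall_integral_pow_smul_eq_zero hab
    (ContinuousOn.inv₀ (by fun_prop) fun τ hτ => (hpos hτ).ne')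
    (fun x _ y _ hxy => sub_right_injective (inv_injective hxy))
    ((continuousOn_sub_rpow ht p).smul hk) hmoments
  exact fun τ hτ => (smul_eq_zero.1 (hzero hτ)).resolve_left (rpow_pos_of_pos (hpos hτ) p).ne'

end PowerKernel

section RiemannLiouville

variable {E : Type*} [NormedAddCommGroup E] [NormedSpace ℝ E] {T β : ℝ} {h : ℝ → E}

/-- The Riemann–Liouville fractional integral of order `β` of `h`, based at `0`. The Caputo
derivative of order `α` of `f` is `riemannLiouvilleIntegral (m - α) (iteratedDeriv m f)`, where
`m = ⌈α⌉`. For `t < 0` the value is not meaningful, since the base of the real power is negative. -/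
noncomputable def riemannLiouvilleIntegral (β : ℝ) (h : ℝ → E) (t : ℝ) : E :=
  (1 / Gamma β) • ∫ τ in (0 : ℝ)..t, (t - τ) ^ (β - 1) • h τ

theorem riemannLiouvilleIntegral_add_sub (hβ : 0 < β) (hc : Continuous h)
    (hper : Function.Periodic h T) (t : ℝ) :
    riemannLiouvilleIntegral β h (t + T) - riemannLiouvilleIntegral β h t =
      (1 / Gamma β) • ∫ τ in (-T)..0, (t - τ) ^ (β - 1) • h τ := by
  have hint (a b : ℝ) : IntervalIntegrable (fun τ => (t - τ) ^ (β - 1) • h τ) volume a b := by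
    have hpow := (intervalIntegrable_rpow' (r := β - 1) (a := t - a) (b := t - b)
      (by linarith)).comp_sub_left t
    simp only [sub_sub_cancel] at hpow
    exact hpow.smul_continuousOn hc.continuousOn
  have hshift : ∫ τ in (0 : ℝ)..(t + T), (t + T - τ) ^ (β - 1) • h τ =
      ∫ τ in (-T)..t, (t - τ) ^ (β - 1) • h τ := by
    simpa [hper _] using (integral_comp_add_right (a := -T) (b := t)
      (fun τ => (t + T - τ) ^ (β - 1) • h τ) T).symm
  rw [riemannLiouvilleIntegral, riemannLiouvilleIntegral, hshift, ← smul_sub,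
    ← integral_add_adjacent_intervals (hint (-T) 0) (hint 0 t), add_sub_cancel_right]

theorem eq_zero_of_eventually_riemannLiouvilleIntegral_add_eq [CompleteSpace E] (hT : 0 < T)
    (hβ : 0 < β) (hβn : ∀ n : ℕ, β ≠ n) (hc : Continuous h) (hper : Function.Periodic h T)
    {t₀ : ℝ} (ht₀ : 0 < t₀)
    (heq : ∀ᶠ t in 𝓝 t₀, riemannLiouvilleIntegral β h (t + T) = riemannLiouvilleIntegral β h t) :
    h = 0 := by
  have hzero : EqOn h 0 (Icc (-T) 0) := by
    refine eqOn_zero_of_eventually_integral_sub_rpow_smul_eq_zero (p := β - 1) (by linarith) ht₀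
      (fun n hn => hβn (n + 1) (by push_cast; linarith)) hc.continuousOn ?_
    filter_upwards [heq] with t ht
    have hsmul := riemannLiouvilleIntegral_add_sub hβ hc hper t
    rw [sub_eq_zero.2 ht] at hsmul
    exact (smul_eq_zero.1 hsmul.symm).resolve_left (one_div_ne_zero (Gamma_pos_of_pos hβ).ne')
  funext x
  obtain ⟨y, hy, hxy⟩ := hper.exists_mem_Ico hT x (-T)
  exact hxy.trans (hzero ⟨hy.1, by linarith [hy.2]⟩)

end RiemannLiouville

section Periodic

variable {E : Type*} [NormedAddCommGroup E] [NormedSpace ℝ E] {T : ℝ} {f : ℝ → E}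

theorem periodic_iteratedDeriv (hper : Function.Periodic f T) (n : ℕ) :
    Function.Periodic (iteratedDeriv n f) T := fun t => by
  simpa only [hper.funext] using (congrFun (iteratedDeriv_comp_add_const n f T) t).symm

theorem eq_of_periodic_of_iteratedDeriv_eq_zero (hT : T ≠ 0) {n : ℕ}
    (hper : Function.Periodic f T) (hf : ContDiff ℝ n f) (h : iteratedDeriv n f = 0) (x y : ℝ) :
    f x = f y := by
  induction n generalizing f x y with
  | zero => simp_all
  | succ n ih =>
    have hd : Differentiable ℝ f := hf.differentiable (by simp)
    have hconst : ∀ z, deriv f z = deriv f 0 := fun z =>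
      ih (by simpa only [iteratedDeriv_one] using periodic_iteratedDeriv hper 1)
        (contDiff_succ_iff_deriv.1 hf).2.2 (by rwa [← iteratedDeriv_succ']) z 0
    have haffine : f T - T • deriv f 0 = f 0 - (0 : ℝ) • deriv f 0 :=
      is_const_of_deriv_eq_zero (f := fun z => f z - z • deriv f 0) (by fun_prop)
        (fun z => by
          simpa [hconst z] using
            ((hd z).hasDerivAt.fun_sub ((hasDerivAt_id z).smul_const (deriv f 0))).deriv) T 0
    have hslope : deriv f 0 = 0 := by simpa [hper.eq, hT] using haffine
    exact is_const_of_deriv_eq_zero hd (fun z => (hconst z).trans hslope) x y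

end Periodic

theorem caputo_not_periodic_general {E : Type*} [NormedAddCommGroup E] [NormedSpace ℝ E]
    [CompleteSpace E] {T α t₀ : ℝ} (hT : 0 < T) (hαZ : ∀ n : ℤ, α ≠ n) {m : ℕ} (hαm : α < m)
    {f : ℝ → E} (hper : Function.Periodic f T) (hnc : ∃ t₁ t₂, f t₁ ≠ f t₂) (hf : ContDiff ℝ m f)
    (ht₀ : 0 < t₀) :
    ∃ᶠ t in 𝓝 t₀, riemannLiouvilleIntegral (m - α) (iteratedDeriv m f) (t + T) ≠
      riemannLiouvilleIntegral (m - α) (iteratedDeriv m f) t := by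
  intro heq
  have hzero : iteratedDeriv m f = 0 :=
    eq_zero_of_eventually_riemannLiouvilleIntegral_add_eq hT (sub_pos.2 hαm)
      (fun n hn => hαZ (m - n) (by push_cast; linarith))
      (hf.continuous_iteratedDeriv m le_rfl) (periodic_iteratedDeriv hper m) ht₀
      (by simpa using heq)
  obtain ⟨t₁, t₂, hne⟩ := hnc
  exact hne (eq_of_periodic_of_iteratedDeriv_eq_zero hT.ne' hper hf hzero t₁ t₂)

end

/-- The Caputo fractional derivative of a nonconstant `T`-periodic,
`m`-times continuously differentiable function is not `T`-periodic on `[0, ∞)`. -/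
theorem caputo_not_periodic
    (T α : ℝ) (hT : 0 < T) (hα : 0 < α) (hαZ : ∀ n : ℤ, α ≠ (n : ℝ))
    (m : ℕ) (hm : m = ⌈α⌉₊)
    (f : ℝ → ℝ) (hper : ∀ t : ℝ, f (t + T) = f t)
    (hnc : ∃ t₁ t₂ : ℝ, f t₁ ≠ f t₂)
    (hsm : ContDiff ℝ m f)
    (g : ℝ → ℝ)
    (hg : ∀ t : ℝ, g t =
      (1 / Real.Gamma ((m : ℝ) - α)) *
        ∫ τ in (0:ℝ)..t, (t - τ) ^ ((m : ℝ) - α - 1) * iteratedDeriv m f τ) :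
    ¬ (∀ t : ℝ, 0 ≤ t → g (t + T) = g t) := by
  intro hgT
  have hαm : α < m := lt_of_le_of_ne (hm ▸ Nat.le_ceil α) (mod_cast hαZ m)
  obtain rfl : g = riemannLiouvilleIntegral (m - α) (iteratedDeriv m f) := funext hg
  obtain ⟨t, hne, ht⟩ := ((caputo_not_periodic_general hT hαZ hαm hper hnc hsm
    one_pos).and_eventually (lt_mem_nhds one_pos)).exists
  exact hne (hgT t ht.le)
end

section
/- Let T > 0, let α > 0 be a non-integer real number, let m = ⌈α⌉, and let f : ℝ → ℝ be a nonconstant, T-periodic, m-times continuously differentiable function. Suppose g : ℝ → ℝ is such that for every t > 0 the sequence n ↦ (t/n)^{−α} · Σ_{k=0}^{n} (−1)^k (α^{(k)}/k!) f(t − k·t/n) converges to g(t) as n → ∞ (this is the Grünwald–Letnikov fractional derivative of f of order α with lower terminal 0). Then it is NOT the case that g(t+T) = g(t) for all t > 0. -/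
/-!
Sample `f` with steps `T / j`. By periodicity the quotients at `p T` and `(p + 1) T` share their
first `p j + 1` terms, and the remaining terms again sample one period of `f`. Since the `k`-th
weight is asymptotic to `k ^ (-α - 1) / Γ(-α)`, letting `j → ∞` gives
`g ((p + 1) T) - g (p T) = T ^ (-α) / Γ(-α) * ∫ s in 0..1, (p + s) ^ (-α - 1) * f (-s T)`.
If `g` is `T`-periodic the integral vanishes for every `p ≥ 1`. As a function of `x = 1 / p` it is,
up to a factor `p ^ (-α - 1)`, a power series whose coefficients are nonzero multiples of the
moments of `s ↦ f (-s T)`; its zeros accumulate at `0`, so all moments vanish, and by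
Weierstrass's theorem so does `f`.
-/

open Real Filter Topology

/-- The falling factorial `x⁽ʲ⁾ = ∏_{l=0}^{j-1} (x - l)`. -/
noncomputable def fallingFactorial (x : ℝ) (j : ℕ) : ℝ :=
  ∏ l ∈ Finset.range j, (x - (l : ℝ))

open MeasureTheory Set

/-- The weight `(-1)ᵏ α⁽ᵏ⁾ / k!` of the `k`-th backward sample in the Grünwald–Letnikov difference
quotient of order `α`. -/
noncomputable def gruenwaldLetnikovCoeff (α : ℝ) (k : ℕ) : ℝ :=
  (-1 : ℝ) ^ k * (fallingFactorial α k / (Nat.factorial k : ℝ))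

theorem neg_one_pow_mul_fallingFactorial (x : ℝ) (n : ℕ) :
    (-1) ^ n * fallingFactorial x n = ∏ j ∈ Finset.range n, (-x + (j : ℝ)) := by
  simp only [fallingFactorial, ← neg_sub x, Finset.prod_neg, Finset.card_range, neg_add_eq_sub]

theorem tendsto_gruenwaldLetnikovCoeff_mul_rpow {α : ℝ} (hα : ∀ n : ℕ, α ≠ n) :
    Tendsto (fun k : ℕ => gruenwaldLetnikovCoeff α k * (k : ℝ) ^ (α + 1)) atTop
      (𝓝 (Gamma (-α))⁻¹) := by
  have hΓ : Gamma (-α) ≠ 0 := Gamma_ne_zero fun n => by simpa using hα n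
  have hratio : Tendsto (fun n : ℕ => (1 + 1 / (n : ℝ)) ^ α) atTop (𝓝 1) := by
    have h := (tendsto_const_nhds (x := (1 : ℝ))).add tendsto_one_div_atTop_nhds_zero_nat
    simpa using h.rpow_const (p := α) (by simp)
  have hlim := ((GammaSeq_tendsto_Gamma (-α)).inv₀ hΓ).mul hratio
  rw [mul_one] at hlim
  refine (tendsto_add_atTop_iff_nat 1).mp (hlim.congr' ?_)
  filter_upwards [eventually_gt_atTop 0] with n hn
  have hn' : (0 : ℝ) < n := by exact_mod_cast hn
  rw [GammaSeq, ← neg_one_pow_mul_fallingFactorial, gruenwaldLetnikovCoeff, Nat.factorial_succ,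
    one_add_div hn'.ne', div_rpow (by positivity) hn'.le, rpow_neg hn'.le]
  push_cast
  rw [rpow_add (by positivity), rpow_one]
  field_simp

theorem ring_choose_ne_zero {K : Type*} [Field K] [CharZero K] {r : K} (hr : ∀ n : ℕ, r ≠ n)
    (n : ℕ) : Ring.choose r n ≠ 0 := by
  rw [Ring.choose_eq_smul, Polynomial.descPochhammer_smeval_eq_ascPochhammer,
    Polynomial.ascPochhammer_smeval_eq_eval]
  refine smul_ne_zero (inv_ne_zero (Nat.cast_ne_zero.mpr n.factorial_ne_zero)) fun h => ?_
  obtain ⟨k, hk, hkr⟩ := (ascPochhammer_eval_eq_zero_iff n _).mp h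
  obtain ⟨d, rfl⟩ := Nat.exists_eq_add_of_lt hk
  push_cast at hkr
  exact hr d (by linear_combination hkr)

theorem eq_zero_of_periodic_of_forall_mem_Icc {β : Type*} [Zero β] {f : ℝ → β} {T : ℝ}
    (hf : Function.Periodic f T) (hT : T ≠ 0)
    (h : ∀ s ∈ Icc (0 : ℝ) 1, f (-(s * T)) = 0) : f = 0 := by
  funext t
  rw [Pi.zero_apply, ← h (Int.fract (-t / T)) ⟨Int.fract_nonneg _, (Int.fract_lt_one _).le⟩,
    ← hf.sub_int_mul_eq (-⌊-t / T⌋)]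
  congr 1
  rw [Int.fract]
  push_cast
  field_simp
  ring

variable {E : Type*} [NormedAddCommGroup E] [NormedSpace ℝ E]

theorem integral_comp_natCeil [CompleteSpace E] (F : ℕ → E) (n : ℕ) :
    ∫ x in (0 : ℝ)..n, F ⌈x⌉₊ = ∑ i ∈ Finset.range n, F (i + 1) := by
  have hceil (i : ℕ) :
      EqOn (fun x : ℝ => F ⌈x⌉₊) (fun _ => F (i + 1)) (uIoc (i : ℝ) (i + 1 : ℕ)) := by
    intro x hx
    rw [uIoc_of_le (by gcongr; simp)] at hx
    simp only [(Nat.ceil_eq_iff i.succ_ne_zero).mpr (by simpa using hx), Nat.succ_eq_add_one]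
  have hsum := intervalIntegral.sum_integral_adjacent_intervals (μ := volume)
    (a := fun i : ℕ => (i : ℝ)) (n := n) fun i _ =>
      (intervalIntegrable_const.congr (hceil i).symm : IntervalIntegrable (fun x => F ⌈x⌉₊) _ _ _)
  rw [← Nat.cast_zero, ← hsum]
  refine Finset.sum_congr rfl fun i _ => ?_
  rw [intervalIntegral.integral_congr_ae (.of_forall (hceil i))]
  simp

theorem tendsto_average_of_tendsto_natCeil [CompleteSpace E] {F : ℕ → ℕ → E} {φ : ℝ → E} {C : ℝ}
    (hbound : ∀ j, ∀ k ≤ j, ‖F j k‖ ≤ C)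
    (hlim : ∀ s ∈ Ioc (0 : ℝ) 1, Tendsto (fun j : ℕ => F j ⌈s * j⌉₊) atTop (𝓝 (φ s))) :
    Tendsto (fun j : ℕ => (j : ℝ)⁻¹ • ∑ i ∈ Finset.range j, F j (i + 1)) atTop
      (𝓝 (∫ s in (0 : ℝ)..1, φ s)) := by
  have key : Tendsto (fun j : ℕ => ∫ s in (0 : ℝ)..1, F j ⌈s * j⌉₊) atTop
      (𝓝 (∫ s in (0 : ℝ)..1, φ s)) := by
    refine intervalIntegral.tendsto_integral_filter_of_dominated_convergence (fun _ => C)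
      (.of_forall fun j => ?_) (.of_forall fun j => .of_forall fun s hs => ?_)
      intervalIntegrable_const
      (.of_forall fun s hs => hlim s (by rwa [uIoc_of_le zero_le_one] at hs))
    · exact (StronglyMeasurable.of_discrete.comp_measurable
        (measurable_id.mul_const _).nat_ceil).aestronglyMeasurable
    · rw [uIoc_of_le zero_le_one] at hs
      exact hbound j _ (Nat.ceil_le.mpr (mul_le_of_le_one_left j.cast_nonneg hs.2))
  refine key.congr' ?_
  filter_upwards [eventually_ne_atTop 0] with j hj
  rw [intervalIntegral.integral_comp_mul_right (fun x => F j ⌈x⌉₊) (by exact_mod_cast hj), zero_mul,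
    one_mul, integral_comp_natCeil]

theorem tendsto_weighted_average [CompleteSpace E] {a : ℕ → ℝ} {L : ℝ}
    (ha : Tendsto a atTop (𝓝 L)) {H : ℝ → E} (hH : ContinuousOn H (Icc 0 1)) (p : ℕ) :
    Tendsto (fun j : ℕ => (j : ℝ)⁻¹ • ∑ i ∈ Finset.range j,
        a (p * j + (i + 1)) • H ((i + 1 : ℕ) / j)) atTop
      (𝓝 (L • ∫ s in (0 : ℝ)..1, H s)) := by
  obtain ⟨A, hA⟩ := ha.norm.bddAbove_range
  obtain ⟨C, hC⟩ := isCompact_Icc.exists_bound_of_continuousOn hH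
  have hmem {j k : ℕ} (hk : k ≤ j) : (k / j : ℝ) ∈ Icc (0 : ℝ) 1 :=
    ⟨by positivity, div_le_one_of_le₀ (by exact_mod_cast hk) j.cast_nonneg⟩
  rw [← intervalIntegral.integral_smul]
  refine tendsto_average_of_tendsto_natCeil (F := fun j k => a (p * j + k) • H (k / j))
    (C := A * C) (fun j k hk => ?_) fun s hs => ?_
  · rw [norm_smul]
    have hak : ‖a (p * j + k)‖ ≤ A := hA ⟨_, rfl⟩
    exact mul_le_mul hak (hC _ (hmem hk)) (norm_nonneg _) ((norm_nonneg _).trans hak)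
  · have hceil : Tendsto (fun j : ℕ => p * j + ⌈s * j⌉₊) atTop atTop :=
      tendsto_atTop_mono (fun _ => Nat.le_add_left _ _) <| tendsto_nat_ceil_atTop.comp <|
        tendsto_natCast_atTop_atTop.const_mul_atTop hs.1
    have hdiv : Tendsto (fun j : ℕ => (⌈s * j⌉₊ / j : ℝ)) atTop (𝓝[Icc 0 1] s) := by
      refine tendsto_nhdsWithin_iff.mpr ⟨(tendsto_nat_ceil_mul_div_atTop hs.1.le).comp
        tendsto_natCast_atTop_atTop, .of_forall fun j => hmem ?_⟩
      exact Nat.ceil_le.mpr (mul_le_of_le_one_left j.cast_nonneg hs.2)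
    exact (ha.comp hceil).smul ((hH s (Ioc_subset_Icc_self hs)).tendsto.comp hdiv)

theorem tendsto_rpow_smul_sum_block [CompleteSpace E] {c : ℕ → ℝ} {r L : ℝ}
    (hc : Tendsto (fun k : ℕ => c k * (k : ℝ) ^ r) atTop (𝓝 L))
    {G : ℝ → E} (hG : ContinuousOn G (Icc 0 1)) {p : ℕ} (hp : 0 < p) :
    Tendsto (fun j : ℕ => (j : ℝ) ^ (r - 1) • ∑ i ∈ Finset.range j,
        c (p * j + (i + 1)) • G ((i + 1 : ℕ) / j)) atTop
      (𝓝 (L • ∫ s in (0 : ℝ)..1, ((p : ℝ) + s) ^ (-r) • G s)) := by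
  have hH : ContinuousOn (fun s : ℝ => ((p : ℝ) + s) ^ (-r) • G s) (Icc 0 1) := by
    refine ContinuousOn.smul (ContinuousOn.rpow_const (by fun_prop) fun s hs => Or.inl ?_) hG
    have := hs.1
    positivity
  refine (tendsto_weighted_average hc hH p).congr' ?_
  filter_upwards [eventually_gt_atTop 0] with j hj
  have hj' : (0 : ℝ) < j := by exact_mod_cast hj
  simp only [Finset.smul_sum, smul_smul]
  refine Finset.sum_congr rfl fun i _ => ?_
  have hk : (p : ℝ) + (i + 1 : ℕ) / j = (p * j + (i + 1) : ℕ) / j := by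
    push_cast
    field_simp
  have hk' : (0 : ℝ) < (p * j + (i + 1) : ℕ) := by positivity
  rw [hk, div_rpow hk'.le hj'.le, rpow_neg hk'.le, rpow_neg hj'.le, rpow_sub_one hj'.ne']
  congr 1
  field_simp

theorem hasSum_pow_smul_integral {a : ℕ → ℝ} {u : ℝ → ℝ}
    (hu : ∀ y, ‖y‖ < 1 → HasSum (fun n => a n * y ^ n) (u y))
    {G : ℝ → E} (hG : ContinuousOn G (Icc 0 1)) {x : ℝ} (hx : ‖x‖ < 1) :
    HasSum (fun n => x ^ n • a n • ∫ s in (0 : ℝ)..1, s ^ n • G s)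
      (∫ s in (0 : ℝ)..1, u (x * s) • G s) := by
  obtain ⟨C, hC⟩ := isCompact_Icc.exists_bound_of_continuousOn hG
  have hpow (n : ℕ) {s : ℝ} (hs : s ∈ Ioc (0 : ℝ) 1) : ‖s ^ n‖ ≤ 1 := by
    rw [norm_pow, norm_of_nonneg hs.1.le]
    exact pow_le_one₀ hs.1.le hs.2
  simp_rw [smul_smul, ← intervalIntegral.integral_smul]
  refine intervalIntegral.hasSum_integral_of_dominated_convergence
    (fun n _ => ‖a n * x ^ n‖ * C) (fun n => ?_) (fun n => .of_forall fun s hs => ?_)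
    (.of_forall fun _ _ => (hu x hx).summable.norm.mul_right C) intervalIntegrable_const
    (.of_forall fun s hs => ?_)
  · rw [uIoc_of_le zero_le_one]
    exact ((by fun_prop : ContinuousOn (fun s : ℝ => (x ^ n * a n) • s ^ n • G s) (Icc 0 1)).mono
      Ioc_subset_Icc_self).aestronglyMeasurable measurableSet_Ioc
  · rw [uIoc_of_le zero_le_one] at hs
    rw [norm_smul, norm_smul, mul_comm (x ^ n)]
    gcongr
    exact (mul_le_mul (hpow n hs) (hC s (Ioc_subset_Icc_self hs)) (norm_nonneg _)
      zero_le_one).trans_eq (one_mul C)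
  · rw [uIoc_of_le zero_le_one] at hs
    have hxs : ‖x * s‖ < 1 := by
      simpa [norm_of_nonneg hs.1.le] using
        mul_lt_one_of_nonneg_of_lt_one_left (norm_nonneg x) hx hs.2
    convert (hu (x * s) hxs).smul_const (G s) using 2 with n
    rw [smul_smul]
    ring_nf

theorem coeff_eq_zero_of_hasSum_of_frequently_eq_zero {b : ℕ → E} {φ : ℝ → E}
    (hφ : ∀ᶠ x in 𝓝 0, HasSum (fun n => x ^ n • b n) (φ x)) (h0 : ∃ᶠ x in 𝓝[≠] 0, φ x = 0)
    (n : ℕ) : b n = 0 := by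
  set P : FormalMultilinearSeries ℝ ℝ E :=
    fun n => ContinuousMultilinearMap.mkPiRing ℝ (Fin n) (b n) with hP
  have hcoeff (n : ℕ) : P.coeff n = b n := by simp [hP, FormalMultilinearSeries.coeff]
  have hser : HasFPowerSeriesAt φ P 0 := by
    simpa [hasFPowerSeriesAt_iff, hcoeff] using hφ
  have hP0 : P = 0 := hser.eq_zero_of_eventually
    (hser.analyticAt.frequently_zero_iff_eventually_zero.mp h0)
  rw [← hcoeff, hP0]
  simp [FormalMultilinearSeries.coeff]

theorem integral_pow_smul_eq_zero {β : ℝ} (hβ : ∀ n : ℕ, β ≠ n) {G : ℝ → E}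
    (hG : ContinuousOn G (Icc 0 1))
    (h : ∃ᶠ p : ℕ in atTop, ∫ s in (0 : ℝ)..1, ((p : ℝ) + s) ^ β • G s = 0) (n : ℕ) :
    ∫ s in (0 : ℝ)..1, s ^ n • G s = 0 := by
  have hbinom (y : ℝ) (hy : ‖y‖ < 1) :
      HasSum (fun n => Ring.choose β n * y ^ n) ((1 + y) ^ β) := by
    have hy' := (one_add_rpow_hasFPowerSeriesOnBall_zero (a := β)).hasSum (y := y)
      (by simpa [← ofReal_norm] using hy)
    simpa [binomialSeries, FormalMultilinearSeries.coeff_ofScalars, mul_comm (y ^ _)] using hy'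
  have hinv : Tendsto (fun p : ℕ => (p : ℝ)⁻¹) atTop (𝓝[≠] 0) :=
    (tendsto_inv_atTop_nhdsGT_zero.comp tendsto_natCast_atTop_atTop).mono_right
      (nhdsWithin_mono _ fun _ => ne_of_gt)
  have hzero : ∃ᶠ x : ℝ in 𝓝[≠] 0, ∫ s in (0 : ℝ)..1, (1 + x * s) ^ β • G s = 0 := by
    refine hinv.frequently ((h.and_eventually (eventually_gt_atTop 0)).mono fun p ⟨hp, hp0⟩ => ?_)
    have hp0' : (0 : ℝ) < p := by exact_mod_cast hp0
    have hscale : ∫ s in (0 : ℝ)..1, ((p : ℝ) + s) ^ β • G s =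
        (p : ℝ) ^ β • ∫ s in (0 : ℝ)..1, (1 + (p : ℝ)⁻¹ * s) ^ β • G s := by
      rw [← intervalIntegral.integral_smul]
      refine intervalIntegral.integral_congr fun s hs => ?_
      rw [uIcc_of_le zero_le_one] at hs
      have hs0 : 0 ≤ 1 + (p : ℝ)⁻¹ * s := by have := hs.1; positivity
      simp only [smul_smul]
      rw [← mul_rpow hp0'.le hs0, mul_add, mul_one, mul_inv_cancel_left₀ hp0'.ne']
    exact (smul_eq_zero.mp (hscale ▸ hp)).resolve_left (rpow_pos_of_pos hp0' β).ne'
  have hsum := Metric.eventually_nhds_iff_ball.mpr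
    ⟨1, one_pos, fun x hx => hasSum_pow_smul_integral hbinom hG (mem_ball_zero_iff.mp hx)⟩
  exact (smul_eq_zero.mp (coeff_eq_zero_of_hasSum_of_frequently_eq_zero hsum hzero n)).resolve_left
    (ring_choose_ne_zero hβ n)

theorem integral_eval_smul_eq_zero {a b : ℝ} {G : ℝ → E}
    (hG : IntervalIntegrable G volume a b) (h : ∀ n : ℕ, ∫ s in a..b, s ^ n • G s = 0)
    (P : Polynomial ℝ) : ∫ s in a..b, P.eval s • G s = 0 := by
  have hint (i : ℕ) : IntervalIntegrable (fun s => P.coeff i • s ^ i • G s) volume a b :=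
    (hG.continuousOn_smul (continuousOn_pow i)).smul (P.coeff i)
  simp_rw [Polynomial.eval_eq_sum_range, Finset.sum_smul, mul_smul]
  rw [intervalIntegral.integral_finsetSum fun i _ => hint i]
  simp_rw [intervalIntegral.integral_smul, h, smul_zero, Finset.sum_const_zero]

theorem integral_smul_eq_zero_of_integral_pow_smul_eq_zero {a b : ℝ} (hab : a ≤ b) {G : ℝ → E}
    (hG : IntervalIntegrable G volume a b) (h : ∀ n : ℕ, ∫ s in a..b, s ^ n • G s = 0)
    {g : ℝ → ℝ} (hg : ContinuousOn g (Icc a b)) : ∫ s in a..b, g s • G s = 0 := by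
  rw [← uIcc_of_le hab] at hg
  have hbound (ε : ℝ) (hε : 0 < ε) :
      ‖∫ s in a..b, g s • G s‖ ≤ ε * ∫ s in a..b, ‖G s‖ := by
    obtain ⟨P, hP⟩ := exists_polynomial_near_of_continuousOn a b g (uIcc_of_le hab ▸ hg) ε hε
    have hsub : ∫ s in a..b, g s • G s = ∫ s in a..b, (g s - P.eval s) • G s := by
      simp_rw [sub_smul]
      rw [intervalIntegral.integral_sub (hG.continuousOn_smul hg)
        (hG.continuousOn_smul P.continuousOn), integral_eval_smul_eq_zero hG h, sub_zero]
    rw [hsub, ← intervalIntegral.integral_const_mul]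
    refine intervalIntegral.norm_integral_le_of_norm_le hab (.of_forall fun s hs => ?_)
      (hG.norm.const_mul ε)
    rw [norm_smul, norm_sub_rev]
    gcongr
    exact (hP s (Ioc_subset_Icc_self hs)).le
  have hlim : Tendsto (fun ε : ℝ => ε * ∫ s in a..b, ‖G s‖) (𝓝[>] 0) (𝓝 0) :=
    tendsto_nhdsWithin_of_tendsto_nhds (Continuous.tendsto' (by fun_prop) _ _ (zero_mul _))
  exact norm_le_zero_iff.mp (ge_of_tendsto hlim (eventually_mem_nhdsWithin.mono hbound))

theorem eqOn_zero_of_integral_pow_smul_eq_zero [CompleteSpace E] {a b : ℝ} (hab : a < b)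
    {G : ℝ → E} (hG : ContinuousOn G (Icc a b)) (h : ∀ n : ℕ, ∫ s in a..b, s ^ n • G s = 0) :
    EqOn G 0 (Icc a b) := by
  intro s hs
  obtain ⟨ℓ, -, hℓ⟩ := exists_dual_vector'' ℝ (G s)
  have hℓG : ContinuousOn (fun t => ℓ (G t)) (Icc a b) := ℓ.continuous.comp_continuousOn hG
  have hGint : IntervalIntegrable G volume a b := hG.intervalIntegrable_of_Icc hab.le
  have hsq : ∫ t in a..b, ℓ (G t) ^ 2 = 0 := by
    have hint := integral_smul_eq_zero_of_integral_pow_smul_eq_zero hab.le hGint h hℓG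
    have := ℓ.intervalIntegral_comp_comm
      (hGint.continuousOn_smul (uIcc_of_le hab.le ▸ hℓG : ContinuousOn _ (uIcc a b)))
    simpa [hint, pow_two] using this
  by_contra hne
  have hℓs : ℓ (G s) ≠ 0 := by simpa [hℓ] using hne
  exact (intervalIntegral.integral_pos hab (hℓG.pow 2) (fun _ _ => sq_nonneg _)
    ⟨s, hs, sq_pos_of_ne_zero hℓs⟩).ne' hsq

/-- `f` has Grünwald–Letnikov derivative `f'` of order `α` with lower terminal `0` at `t`, that is,
the difference quotients with `n` steps of length `t / n` converge to `f'`. Negative orders `α`,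
which give fractional integrals, are allowed. -/
def HasGruenwaldLetnikovDerivAt (α : ℝ) (f : ℝ → E) (f' : E) (t : ℝ) : Prop :=
  Tendsto (fun n : ℕ => (t / n) ^ (-α) •
    ∑ k ∈ Finset.range (n + 1), gruenwaldLetnikovCoeff α k • f (t - k * (t / n))) atTop (𝓝 f')

namespace HasGruenwaldLetnikovDerivAt

variable {α T : ℝ} {f : ℝ → E}

theorem tendsto_of_periodic {y : E} {q : ℕ} (h : HasGruenwaldLetnikovDerivAt α f y (q * T))
    (hf : Function.Periodic f T) (hq : 0 < q) :
    Tendsto (fun j : ℕ => (T / j) ^ (-α) • ∑ k ∈ Finset.range (q * j + 1),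
      gruenwaldLetnikovCoeff α k • f (-(k / j * T))) atTop (𝓝 y) := by
  refine (h.comp (tendsto_id.const_mul_atTop' hq)).congr fun j => ?_
  have hstep : (q : ℝ) * T / (q * j : ℕ) = T / j := by
    rw [Nat.cast_mul, mul_div_mul_left _ _ (by positivity)]
  have hsample (k : ℕ) : f (q * T - k * (T / j)) = f (-(k / j * T)) := by
    rw [hf.nat_mul_sub_eq]
    congr 1
    ring
  simp only [Function.comp_apply, id_eq, hstep, hsample]

theorem tendsto_sub_of_periodic {y y' : E} {p : ℕ}
    (h : HasGruenwaldLetnikovDerivAt α f y (p * T))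
    (h' : HasGruenwaldLetnikovDerivAt α f y' ((p + 1 : ℕ) * T))
    (hf : Function.Periodic f T) (hp : 0 < p) :
    Tendsto (fun j : ℕ => (T / j) ^ (-α) • ∑ i ∈ Finset.range j,
      gruenwaldLetnikovCoeff α (p * j + (i + 1)) • f (-((i + 1 : ℕ) / j * T))) atTop
      (𝓝 (y' - y)) := by
  refine ((h'.tendsto_of_periodic hf p.succ_pos).sub (h.tendsto_of_periodic hf hp)).congr' ?_
  filter_upwards [eventually_ne_atTop 0] with j hj
  have hsample (i : ℕ) : f (-((p * j + (i + 1) : ℕ) / j * T)) = f (-((i + 1 : ℕ) / j * T)) := by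
    rw [← hf.sub_nat_mul_eq (x := -((i + 1 : ℕ) / j * T)) p]
    congr 1
    push_cast
    field_simp
    ring
  rw [← smul_sub, show (p + 1) * j + 1 = p * j + 1 + j by ring, Finset.sum_range_add,
    add_sub_cancel_left]
  simp only [add_assoc, add_comm 1, hsample]

theorem sub_eq_integral_of_periodic [CompleteSpace E] {y y' : E} {p : ℕ}
    (h : HasGruenwaldLetnikovDerivAt α f y (p * T))
    (h' : HasGruenwaldLetnikovDerivAt α f y' ((p + 1 : ℕ) * T))
    (hf : Function.Periodic f T) (hcont : Continuous f) (hT : 0 < T) (hα : ∀ n : ℕ, α ≠ n)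
    (hp : 0 < p) :
    y' - y = (T ^ (-α) * (Gamma (-α))⁻¹) •
      ∫ s in (0 : ℝ)..1, ((p : ℝ) + s) ^ (-(α + 1)) • f (-(s * T)) := by
  have hG : ContinuousOn (fun s => f (-(s * T))) (Icc 0 1) := by fun_prop
  have hblock := (tendsto_rpow_smul_sum_block (tendsto_gruenwaldLetnikovCoeff_mul_rpow hα) hG
    hp).const_smul (T ^ (-α))
  rw [smul_smul] at hblock
  refine tendsto_nhds_unique (h.tendsto_sub_of_periodic h' hf hp) (hblock.congr fun j => ?_)
  rw [smul_smul, div_rpow hT.le j.cast_nonneg, rpow_neg j.cast_nonneg, div_inv_eq_mul,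
    add_sub_cancel_right]

end HasGruenwaldLetnikovDerivAt

theorem gruenwaldLetnikov_not_periodic_general [CompleteSpace E] {T α : ℝ} (hT : 0 < T)
    (hα : ∀ n : ℤ, α ≠ n) {f : ℝ → E} (hf : Function.Periodic f T) (hcont : Continuous f)
    (hf0 : f ≠ 0) {g : ℕ → E}
    (hg : ∀ᶠ n : ℕ in atTop, HasGruenwaldLetnikovDerivAt α f (g n) (n * T)) :
    ∀ᶠ n : ℕ in atTop, g (n + 1) ≠ g n := by
  have hα' (n : ℕ) : α ≠ n := mod_cast hα n
  have hexp (n : ℕ) : -(α + 1) ≠ n := fun h => hα (-n - 1) (by push_cast; linarith)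
  have hconst : T ^ (-α) * (Gamma (-α))⁻¹ ≠ 0 :=
    mul_ne_zero (rpow_pos_of_pos hT _).ne' <|
      inv_ne_zero (Gamma_ne_zero fun n => by simpa using hα' n)
  by_contra hfreq
  have hG : ContinuousOn (fun s => f (-(s * T))) (Icc 0 1) := by fun_prop
  have hzero : ∃ᶠ p : ℕ in atTop,
      ∫ s in (0 : ℝ)..1, ((p : ℝ) + s) ^ (-(α + 1)) • f (-(s * T)) = 0 := by
    refine ((not_eventually.mp hfreq).and_eventually (((eventually_gt_atTop 0).and hg).and
      ((tendsto_add_atTop_nat 1).eventually hg))).mono fun p ⟨hgp, ⟨hp, h⟩, h'⟩ => ?_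
    have hsub := h.sub_eq_integral_of_periodic h' hf hcont hT hα' hp
    rw [not_not.mp hgp, sub_self] at hsub
    exact (smul_eq_zero.mp hsub.symm).resolve_left hconst
  exact hf0 <| eq_zero_of_periodic_of_forall_mem_Icc hf hT.ne' <|
    eqOn_zero_of_integral_pow_smul_eq_zero one_pos hG (integral_pow_smul_eq_zero hexp hG hzero)

/-- The Grünwald–Letnikov fractional derivative of a nonconstant
`T`-periodic, `m`-times continuously differentiable function is not `T`-periodic
on `(0, ∞)`. -/
theorem gruenwaldLetnikov_not_periodic
    (T α : ℝ) (hT : 0 < T) (hα : 0 < α) (hαZ : ∀ n : ℤ, α ≠ (n : ℝ))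
    (m : ℕ) (hm : m = ⌈α⌉₊)
    (f : ℝ → ℝ) (hper : ∀ t : ℝ, f (t + T) = f t)
    (hnc : ∃ t₁ t₂ : ℝ, f t₁ ≠ f t₂)
    (hsm : ContDiff ℝ m f)
    (g : ℝ → ℝ)
    (hg : ∀ t : ℝ, 0 < t →
      Tendsto (fun n : ℕ =>
          (t / n) ^ (-α) *
            ∑ k ∈ Finset.range (n + 1),
              (-1 : ℝ) ^ k * (fallingFactorial α k / (Nat.factorial k : ℝ)) *
                f (t - k * (t / n)))
        atTop (𝓝 (g t))) :
    ¬ (∀ t : ℝ, 0 < t → g (t + T) = g t) := by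
  intro hgper
  have hf0 : f ≠ 0 := by
    rintro rfl
    simp at hnc
  obtain ⟨n, hne, hn⟩ := ((gruenwaldLetnikov_not_periodic_general hT hαZ hper hsm.continuous hf0
    (g := fun n => g (n * T)) ((eventually_gt_atTop 0).mono fun n hn => hg _ (by positivity))).and
    (eventually_gt_atTop 0)).exists
  refine hne ?_
  simpa [add_mul] using hgper (n * T) (by positivity)
end

section
/- Let γ be the Euler–Mascheroni constant and let L > exp(1 − γ). Then the function μ(α) = L^{1−α}/Γ(2−α) is strictly decreasing on the interval [0,1]; that is, for all 0 ≤ α₁ < α₂ ≤ 1, L^{1−α₂}/Γ(2−α₂) < L^{1−α₁}/Γ(2−α₁). -/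
open Real

/-!
In the variable `s = 2 - α`, the logarithm of the quotient is `(s - 1) log L - log Γ(s)`. By strict
convexity, every secant of `log Γ` to the left of `2` has slope less than the derivative of `log Γ`
at `2`, and that derivative is `1 - γ`. So the logarithm increases in `s` as soon as
`1 - γ ≤ log L`.
-/

open Set

lemma log_Gamma_add_one {x : ℝ} (hx : 0 < x) : log (Gamma (x + 1)) = log x + log (Gamma x) := by
  rw [Gamma_add_one hx.ne', log_mul hx.ne' (Gamma_pos_of_pos hx).ne']

-- `log Γ(x) = log Γ(x + 1) - log x` is the sum of a convex and a strictly convex function.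
lemma strictConvexOn_log_Gamma : StrictConvexOn ℝ (Ioi 0) (log ∘ Gamma) := by
  have hshift : ConvexOn ℝ (Ioi 0) fun x ↦ log (Gamma (x + 1)) :=
    (convexOn_log_Gamma.translate_left 1).subset
      (fun x (hx : 0 < x) ↦ show 0 < 1 + x by positivity) (convex_Ioi 0)
  refine (hshift.sub_strictConcaveOn strictConcaveOn_log_Ioi).congr fun x hx ↦ ?_
  simp only [Pi.sub_apply, Function.comp_apply, log_Gamma_add_one hx, add_sub_cancel_left]

lemma hasDerivAt_log_Gamma_two : HasDerivAt (log ∘ Gamma) (1 - eulerMascheroniConstant) 2 := by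
  have hΓ : HasDerivAt Gamma (1 - eulerMascheroniConstant) 2 := by
    simpa [one_add_one_eq_two, neg_add_eq_sub] using hasDerivAt_Gamma_nat 1
  simpa [Function.comp_def] using hΓ.log (by simp)

lemma strictMonoOn_mul_sub_of_strictConvexOn {S : Set ℝ} {f : ℝ → ℝ} {a f' m : ℝ}
    (hf : StrictConvexOn ℝ S f) (ha : a ∈ S) (hf' : HasDerivAt f f' a) (hm : f' ≤ m) :
    StrictMonoOn (fun x ↦ m * x - f x) (S ∩ Iic a) := by
  rintro x ⟨hx, -⟩ y ⟨hy, hya⟩ hxy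
  have hxa : x < a := hxy.trans_le hya
  have hslope : (f y - f x) / (y - x) < m :=
    calc (f y - f x) / (y - x)
      _ ≤ (f a - f x) / (a - x) := hf.convexOn.secant_mono hx hy ha hxy.ne' hxa.ne' hya
      _ = slope f x a := (slope_def_field f x a).symm
      _ < f' := hf.slope_lt_of_hasDerivAt hx ha hxa hf'
      _ ≤ m := hm
  have hsecant : f y - f x < m * (y - x) := (div_lt_iff₀ (sub_pos.2 hxy)).1 hslope
  dsimp only
  linarith

lemma strictMonoOn_rpow_sub_div_Gamma {L a c : ℝ} (ha : 0 < a)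
    (hc : HasDerivAt (log ∘ Gamma) c a) (hL : exp c ≤ L) (b : ℝ) :
    StrictMonoOn (fun s ↦ L ^ (s - b) / Gamma s) (Ioc 0 a) := by
  have hL₀ : 0 < L := (exp_pos c).trans_le hL
  have hlog : StrictMonoOn (fun s ↦ log L * s - (log ∘ Gamma) s) (Ioc 0 a) := by
    rw [← Ioi_inter_Iic]
    exact strictMonoOn_mul_sub_of_strictConvexOn strictConvexOn_log_Gamma ha hc
      ((le_log_iff_exp_le hL₀).2 hL)
  refine (exp_strictMono.comp_strictMonoOn (hlog.add_const (-(log L * b)))).congr fun s hs ↦ ?_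
  calc exp (log L * s - log (Gamma s) + -(log L * b))
    _ = exp (log L * (s - b) - log (Gamma s)) := by ring_nf
    _ = L ^ (s - b) / Gamma s := by
      rw [exp_sub, ← rpow_def_of_pos hL₀, exp_log (Gamma_pos_of_pos hs.1)]

theorem mu_strictAnti_general {L : ℝ} (hL : exp (1 - eulerMascheroniConstant) ≤ L) :
    StrictAntiOn (fun α ↦ L ^ (1 - α) / Gamma (2 - α)) (Ico 0 2) := by
  intro α₁ h₁ α₂ h₂ h₁₂
  have hμ : L ^ (2 - α₂ - 1) / Gamma (2 - α₂) < L ^ (2 - α₁ - 1) / Gamma (2 - α₁) :=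
    strictMonoOn_rpow_sub_div_Gamma two_pos hasDerivAt_log_Gamma_two hL 1
      ⟨sub_pos.2 h₂.2, sub_le_self 2 h₂.1⟩ ⟨sub_pos.2 h₁.2, sub_le_self 2 h₁.1⟩
      (sub_lt_sub_left h₁₂ 2)
  have hexp (α : ℝ) : 2 - α - 1 = 1 - α := by ring
  simpa only [hexp] using hμ

/-- If `L > exp(1 - γ)` where `γ` is the Euler–Mascheroni constant,
then `μ(α) = L^(1-α)/Γ(2-α)` is strictly decreasing on `[0, 1]`. -/
theorem mu_strictAnti
    (L : ℝ) (hL : Real.exp (1 - Real.eulerMascheroniConstant) < L) :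
    ∀ α₁ α₂ : ℝ, 0 ≤ α₁ → α₁ < α₂ → α₂ ≤ 1 →
      L ^ (1 - α₂) / Real.Gamma (2 - α₂) < L ^ (1 - α₁) / Real.Gamma (2 - α₁) :=
  fun _ _ h₁ h₁₂ h₂ ↦ mu_strictAnti_general hL.le
    ⟨h₁, by linarith⟩ ⟨by linarith, by linarith⟩ h₁₂
end
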